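/- Let G_n be the path hypergraph with n vertices v_1, …, v_n and n−1 hyperedges {v_i, v_{i+1}} for i = 1, …, n−1. Then the hierarchy width of G_n equals ⌈log₂ n⌉. -/

import Mathlib

/-!
For every set `E` of edges of a path, `hw E ≤ k` exactly when each run of consecutive edges in `E`
has fewer than `2 ^ k` edges. This goes by induction on `k`, the components of `E` being its
maximal runs. Deleting any one edge from a run leaves a run on either side of it, and if both of
these have fewer than `2 ^ k` edges, then the original run has fewer than `2 ^ (k + 1)`.
Conversely, deleting the median edge of a component with fewer than `2 ^ (k + 1)` edges leaves
fewer than `2 ^ k` on each side.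
-/

/-- Connectivity relation between hyperedges within the edge set `E` of a hypergraph whose
hyperedges have vertex sets given by `dep`. -/
def EdgeConn {α ι : Type*} (dep : ι → Finset α) (E : Finset ι) : ι → ι → Prop :=
  Relation.ReflTransGen fun a b => a ∈ E ∧ b ∈ E ∧ ∃ v, v ∈ dep a ∧ v ∈ dep b

open Classical in
/-- Hierarchy width of the hypergraph with hyperedges `E`, where hyperedge `e` consists of
the vertices `dep e`: `0` if there are no hyperedges; `1 +` the minimum over single-edge
removals for a connected hypergraph; the maximum over connected components otherwise. -/
noncomputable def hw {α ι : Type*} [DecidableEq ι] (dep : ι → Finset α) (E : Finset ι) : ℕ :=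
  E.sup fun e =>
    1 + ((E.filter fun f => EdgeConn dep E e f).attach.inf fun f =>
      ((hw dep ((E.filter fun f => EdgeConn dep E e f).erase f.1) : ℕ∞))).toNat
termination_by E.card
decreasing_by
  exact lt_of_lt_of_le (Finset.card_erase_lt_of_mem f.2)
    (Finset.card_le_card (Finset.filter_subset _ _))

open Finset

section LinearOrder

variable {ι : Type*} [LinearOrder ι]

lemma card_filter_lt_add_card_filter_gt (s : Finset ι) (a : ι) :
    #{x ∈ s | x < a} + #{x ∈ s | a < x} = #(s.erase a) := by
  have disjoint_sides : Disjoint {x ∈ s | x < a} {x ∈ s | a < x} :=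
    disjoint_filter.2 fun _ _ hlt hgt => lt_asymm hlt hgt
  rw [← card_union_of_disjoint disjoint_sides, ← filter_or, ← filter_ne']
  simp only [lt_or_lt_iff_ne]

lemma card_filter_lt_orderEmbOfFin (s : Finset ι) {k : ℕ} (h : #s = k) (i : Fin k) :
    #{x ∈ s | x < s.orderEmbOfFin h i} = i := by
  have lt_eq_map : {x ∈ s | x < s.orderEmbOfFin h i} =
      (Iio i).map (s.orderEmbOfFin h).toEmbedding := by
    ext x
    constructor
    · intro hx
      obtain ⟨hxs, hlt⟩ := mem_filter.1 hx
      rw [← s.map_orderEmbOfFin_univ h] at hxs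
      obtain ⟨j, -, rfl⟩ := mem_map.1 hxs
      exact mem_map_of_mem _ (mem_Iio.2 ((s.orderEmbOfFin h).lt_iff_lt.1 hlt))
    · intro hx
      obtain ⟨j, hj, rfl⟩ := mem_map.1 hx
      exact mem_filter.2 ⟨s.orderEmbOfFin_mem h j, (s.orderEmbOfFin h).lt_iff_lt.2 (mem_Iio.1 hj)⟩
  rw [lt_eq_map, card_map, Fin.card_Iio]

lemma exists_mem_card_filter_lt_and_card_filter_gt {s : Finset ι} (hs : s.Nonempty) {m : ℕ}
    (hm : #s < 2 * m) :
    ∃ a ∈ s, #{x ∈ s | x < a} < m ∧ #{x ∈ s | a < x} < m := by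
  let median := s.orderEmbOfFin rfl ⟨#s / 2, by have := hs.card_pos; omega⟩
  have median_mem : median ∈ s := s.orderEmbOfFin_mem rfl _
  have card_lt : #{x ∈ s | x < median} = #s / 2 := card_filter_lt_orderEmbOfFin s rfl _
  have card_sides := card_filter_lt_add_card_filter_gt s median
  rw [card_erase_of_mem median_mem] at card_sides
  exact ⟨median, median_mem, by omega, by omega⟩

lemma subset_filter_lt_or_subset_filter_gt {s t : Finset ι} {a : ι}
    (hs : (s : Set ι).OrdConnected) (hst : s ⊆ t.erase a) :
    s ⊆ {x ∈ t | x < a} ∨ s ⊆ {x ∈ t | a < x} := by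
  by_contra! h
  obtain ⟨⟨x, hx, x_not_lt⟩, ⟨y, hy, y_not_gt⟩⟩ := h.imp not_subset.1 not_subset.1
  have hax : a ≤ x := not_lt.1 fun hlt => x_not_lt (mem_filter.2 ⟨mem_of_mem_erase (hst hx), hlt⟩)
  have hya : y ≤ a := not_lt.1 fun hgt => y_not_gt (mem_filter.2 ⟨mem_of_mem_erase (hst hy), hgt⟩)
  exact notMem_erase a t (hst (hs.out hy hx ⟨hya, hax⟩))

lemma card_lt_two_mul_of_forall_subset_erase {s : Finset ι} (hs : (s : Set ι).OrdConnected) {a : ι}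
    {m : ℕ} (h : ∀ t ⊆ s.erase a, (t : Set ι).OrdConnected → #t < m) : #s < 2 * m := by
  have card_lt : #{x ∈ s | x < a} < m := by
    refine h _ (fun x hx => ?_) ?_
    · exact mem_erase.2 ⟨(mem_filter.1 hx).2.ne, (mem_filter.1 hx).1⟩
    · rw [coe_filter]
      exact hs.inter Set.ordConnected_Iio
  have card_gt : #{x ∈ s | a < x} < m := by
    refine h _ (fun x hx => ?_) ?_
    · exact mem_erase.2 ⟨(mem_filter.1 hx).2.ne', (mem_filter.1 hx).1⟩
    · rw [coe_filter]
      exact hs.inter Set.ordConnected_Ioi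
  have card_sides := card_filter_lt_add_card_filter_gt s a
  have card_le : #s - 1 ≤ #(s.erase a) := pred_card_le_card_erase
  omega

lemma exists_mem_forall_subset_erase_card_lt {s : Finset ι} (hs : s.Nonempty) {m : ℕ}
    (hm : #s < 2 * m) :
    ∃ a ∈ s, ∀ t ⊆ s.erase a, (t : Set ι).OrdConnected → #t < m := by
  obtain ⟨a, ha, card_lt, card_gt⟩ := exists_mem_card_filter_lt_and_card_filter_gt hs hm
  refine ⟨a, ha, fun t hts ht => ?_⟩
  rcases subset_filter_lt_or_subset_filter_gt ht hts with hlt | hgt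
  · exact (card_le_card hlt).trans_lt card_lt
  · exact (card_le_card hgt).trans_lt card_gt

end LinearOrder

section Hypergraph

variable {α ι : Type*} {dep : ι → Finset α} {E : Finset ι} {e f : ι}

lemma EdgeConn.symm (h : EdgeConn dep E e f) : EdgeConn dep E f e :=
  Relation.ReflTransGen.mono (fun _ _ ⟨hb, ha, v, hvb, hva⟩ => ⟨ha, hb, v, hva, hvb⟩) _ _
    h.swap

open Classical in
/-- The connected component of the hyperedge `e` in the hypergraph with hyperedges `E`, as a set of
hyperedges. It is the set over which the recursion defining `hw` branches. -/
noncomputable def edgeComponent (dep : ι → Finset α) (E : Finset ι) (e : ι) : Finset ι :=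
  {f ∈ E | EdgeConn dep E e f}

lemma mem_edgeComponent : f ∈ edgeComponent dep E e ↔ f ∈ E ∧ EdgeConn dep E e f := by
  simp only [edgeComponent, mem_filter]

lemma edgeComponent_subset : edgeComponent dep E e ⊆ E :=
  fun _ hf => (mem_edgeComponent.1 hf).1

lemma self_mem_edgeComponent (he : e ∈ E) : e ∈ edgeComponent dep E e :=
  mem_edgeComponent.2 ⟨he, .refl⟩

variable [DecidableEq ι]

lemma hw_eq_zero_iff : hw dep E = 0 ↔ E = ∅ := by
  rw [hw, ← Nat.le_zero, Finset.sup_le_iff, eq_empty_iff_forall_notMem]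
  exact forall₂_congr fun _ _ => iff_of_false (by omega) id

lemma hw_le_succ_iff {k : ℕ} :
    hw dep E ≤ k + 1 ↔
      ∀ e ∈ E, ∃ f ∈ edgeComponent dep E e, hw dep ((edgeComponent dep E e).erase f) ≤ k := by
  rw [hw, Finset.sup_le_iff]
  refine forall₂_congr fun e he => ?_
  change 1 + ((edgeComponent dep E e).attach.inf fun f =>
    (hw dep ((edgeComponent dep E e).erase f.1) : ℕ∞)).toNat ≤ k + 1 ↔ _
  -- The infimum is over a nonempty set, hence attained; in particular `toNat` sees a finite value.
  obtain ⟨g, -, hg⟩ := exists_mem_eq_inf (edgeComponent dep E e).attach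
    (attach_nonempty_iff.2 ⟨e, self_mem_edgeComponent he⟩)
    fun f => (hw dep ((edgeComponent dep E e).erase f.1) : ℕ∞)
  rw [hg, ENat.toNat_natCast, add_comm, Nat.add_le_add_iff_right]
  refine ⟨fun h => ⟨g.1, g.2, h⟩, fun ⟨f, hf, hfk⟩ => le_trans ?_ hfk⟩
  exact_mod_cast hg.symm.trans_le (inf_le (mem_attach _ ⟨f, hf⟩))

end Hypergraph

/-- The hyperedges, listed in the order of their indices, form a path: two of them share a vertex
iff they are equal or consecutive. Hyperedges are allowed to have further vertices of their own, as
only the intersection pattern affects `hw`. -/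
def IsPathLike {α ι : Type*} [Preorder ι] (dep : ι → Finset α) : Prop :=
  ∀ a b, (∃ v, v ∈ dep a ∧ v ∈ dep b) ↔ a ⩿ b ∨ b ⩿ a

section Path

variable {α ι : Type*} [LinearOrder ι] {dep : ι → Finset α} {E s : Finset ι} {e f : ι}

lemma EdgeConn.uIcc_subset (h : EdgeConn dep E e f) (hdep : IsPathLike dep) (he : e ∈ E) :
    Set.uIcc e f ⊆ E := by
  induction h with
  | refl => simpa using he
  | @tail b c _ hbc ih =>
    obtain ⟨hb, hc, hv⟩ := hbc
    have uIcc_eq_pair : Set.uIcc b c = {b, c} := by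
      rcases (hdep b c).1 hv with hcov | hcov
      · rw [Set.uIcc_of_le hcov.le, hcov.Icc_eq]
      · rw [Set.uIcc_of_ge hcov.le, hcov.Icc_eq, Set.pair_comm]
    calc Set.uIcc e c ⊆ Set.uIcc e b ∪ Set.uIcc b c := Set.uIcc_subset_uIcc_union_uIcc
      _ ⊆ E := Set.union_subset ih (uIcc_eq_pair ▸ Set.pair_subset hb hc)

variable [LocallyFiniteOrder ι]

lemma edgeConn_of_Icc_subset (hdep : IsPathLike dep) (hef : e ≤ f) (hE : Set.Icc e f ⊆ E) :
    EdgeConn dep E e f := by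
  have cover_chain := le_iff_reflTransGen_covBy.1 hef
  induction cover_chain with
  | refl => exact .refl
  | @tail b c hchain hbc ih =>
    have heb : e ≤ b := le_iff_reflTransGen_covBy.2 hchain
    refine (ih heb ((Set.Icc_subset_Icc_right hbc.le).trans hE)).tail ?_
    exact ⟨hE ⟨heb, hbc.le⟩, hE ⟨hef, le_rfl⟩, (hdep b c).2 (.inl hbc.wcovBy)⟩

lemma edgeConn_iff_uIcc_subset (hdep : IsPathLike dep) (he : e ∈ E) :
    EdgeConn dep E e f ↔ Set.uIcc e f ⊆ E := by
  refine ⟨fun h => h.uIcc_subset hdep he, fun h => ?_⟩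
  rcases le_total e f with hef | hfe
  · exact edgeConn_of_Icc_subset hdep hef (Set.uIcc_of_le hef ▸ h)
  · exact (edgeConn_of_Icc_subset hdep hfe (Set.uIcc_of_ge hfe ▸ h)).symm

lemma subset_edgeComponent (hdep : IsPathLike dep) (hs : (s : Set ι).OrdConnected) (hsE : s ⊆ E)
    (he : e ∈ s) : s ⊆ edgeComponent dep E e := fun _ hf =>
  mem_edgeComponent.2 ⟨hsE hf, (edgeConn_iff_uIcc_subset hdep (hsE he)).2
    ((hs.uIcc_subset he hf).trans (coe_subset.2 hsE))⟩

lemma ordConnected_edgeComponent (hdep : IsPathLike dep) (he : e ∈ E) :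
    (edgeComponent dep E e : Set ι).OrdConnected := by
  refine Set.ordConnected_of_uIcc_subset_left (x := e) fun f hf g hg => ?_
  have hE : Set.uIcc e f ⊆ E :=
    (edgeConn_iff_uIcc_subset hdep he).1 (mem_edgeComponent.1 hf).2
  exact mem_edgeComponent.2 ⟨hE hg, (edgeConn_iff_uIcc_subset hdep he).2
    ((Set.uIcc_subset_uIcc_left hg).trans hE)⟩

theorem hw_le_iff_forall_card_lt_two_pow (hdep : IsPathLike dep) {k : ℕ} :
    hw dep E ≤ k ↔ ∀ s ⊆ E, (s : Set ι).OrdConnected → #s < 2 ^ k := by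
  induction k generalizing E with
  | zero =>
    rw [Nat.le_zero, hw_eq_zero_iff]
    refine ⟨fun hE s hs _ => ?_, fun h => eq_empty_of_forall_notMem fun e he => ?_⟩
    · simp [subset_empty.1 (hE ▸ hs)]
    · simpa using h {e} (singleton_subset_iff.2 he)
        (by simpa using Set.ordConnected_singleton)
  | succ k ih =>
    simp only [hw_le_succ_iff, ih, pow_succ']
    constructor
    · intro h s hsE hs
      obtain rfl | ⟨e, he⟩ := s.eq_empty_or_nonempty
      · simp
      · obtain ⟨f, -, hf⟩ := h e (hsE he)
        exact card_lt_two_mul_of_forall_subset_erase hs fun t hts =>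
          hf t (hts.trans (erase_subset_erase f (subset_edgeComponent hdep hs hsE he)))
    · intro h e he
      exact exists_mem_forall_subset_erase_card_lt ⟨e, self_mem_edgeComponent he⟩
        (h _ edgeComponent_subset (ordConnected_edgeComponent hdep he))

theorem hw_eq_clog_of_ordConnected (hdep : IsPathLike dep) (hE : (E : Set ι).OrdConnected) :
    hw dep E = Nat.clog 2 (#E + 1) := by
  refine eq_of_forall_ge_iff fun k => ?_
  rw [hw_le_iff_forall_card_lt_two_pow hdep, Nat.clog_le_iff_le_pow one_lt_two, Nat.succ_le_iff]
  exact ⟨fun h => h E Subset.rfl hE, fun h s hs _ => (card_le_card hs).trans_lt h⟩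

end Path

lemma isPathLike_consecutive_pairs (n : ℕ) :
    IsPathLike fun i : Fin (n - 1) =>
      ({⟨i.1, by have := i.isLt; omega⟩, ⟨i.1 + 1, by have := i.isLt; omega⟩} :
        Finset (Fin n)) := by
  intro a b
  have wcovBy_iff (i j : Fin (n - 1)) : i ⩿ j ↔ i.1 = j.1 ∨ i.1 + 1 = j.1 := by
    rw [wcovBy_iff_covBy_or_eq, Fin.covBy_iff, Nat.covBy_iff_add_one_eq, Fin.ext_iff, or_comm]
  simp only [wcovBy_iff, mem_insert, mem_singleton, Fin.ext_iff]
  constructor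
  · rintro ⟨v, hva, hvb⟩
    omega
  · intro h
    exact ⟨⟨max a.1 b.1, by omega⟩, by simp only; omega, by simp only; omega⟩

/-- The path hypergraph on `n` vertices `v_0, …, v_{n-1}`, with the `n-1` hyperedges
`{v_i, v_{i+1}}`, has hierarchy width `⌈log₂ n⌉`. -/
theorem stmt8 (n : ℕ) (hn : 1 ≤ n) :
    hw (fun i : Fin (n - 1) =>
        ({⟨i.1, by have := i.isLt; omega⟩, ⟨i.1 + 1, by have := i.isLt; omega⟩} :
          Finset (Fin n)))
      Finset.univ = Nat.clog 2 n := by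
  rw [hw_eq_clog_of_ordConnected (isPathLike_consecutive_pairs n)
      (by simpa using Set.ordConnected_univ),
    card_univ, Fintype.card_fin, Nat.sub_add_cancel hn]
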